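/- Let (Y,G) be another compact Hausdorff space with an action of G by homeomorphisms and ν a G-invariant Borel probability measure on Y. Then for all k ≥ 1, identifying (X × Y)^k with X^k × Y^k, one has IE^{μ×ν}_k(X × Y) = IE^μ_k(X) × IE^ν_k(Y), where G acts on X × Y by the diagonal action s(x,y) = (sx, sy). -/

import Mathlib

open MeasureTheory Set
open scoped Classical ENNReal

/-- `F` is a nonempty `(K,δ)`-invariant finite subset of the group `G`. -/
def FolnerInv {G : Type*} [Group G] (K : Finset G) (δ : ℝ) (F : Finset G) : Prop :=
  F.Nonempty ∧
    (1 - δ) * (F.card : ℝ) ≤ (((F : Set G)) ∩ {s : G | ∀ g ∈ K, g * s ∈ F}).ncard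

/-- The Følner characterisation of amenability for a discrete group `G`. -/
def FolnerAmenable (G : Type*) [Group G] : Prop :=
  ∀ (K : Finset G) (δ : ℝ), 0 < δ → ∃ F : Finset G, FolnerInv K δ F

/-- The limit supremum of `ψ F / |F|` as `F` becomes more and more invariant. -/
noncomputable def invLimsup {G : Type*} [Group G] (ψ : Finset G → ℝ) : ℝ :=
  ⨅ (K : Finset G) (δ : {d : ℝ // 0 < d}),
    sSup ((fun F : Finset G => ψ F / (F.card : ℝ)) '' {F : Finset G | FolnerInv K δ.1 F})

/-- The limit infimum of `ψ F / |F|` as `F` becomes more and more invariant. -/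
noncomputable def invLiminf {G : Type*} [Group G] (ψ : Finset G → ℝ) : ℝ :=
  ⨆ (K : Finset G) (δ : {d : ℝ // 0 < d}),
    sInf ((fun F : Finset G => ψ F / (F.card : ℝ)) '' {F : Finset G | FolnerInv K δ.1 F})

/-- `J ⊆ G` is an independence set for the tuple `A` of subsets of `X` relative to the
map `D : G → Set X`. -/
def IndepRel {G X : Type*} [Group G] [MulAction G X] {k : ℕ} (A : Fin k → Set X)
    (D : G → Set X) (J : Set G) : Prop :=
  ∀ F : Finset G, (F : Set G) ⊆ J → F.Nonempty → ∀ σ : G → Fin k,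
    (⋂ s ∈ F, (D s ∩ (fun x => s • x) ⁻¹' A (σ s))).Nonempty

/-- `J ⊆ G` is an independence set for the tuple `A` relative to the subset `D ⊆ X`. -/
def IndepSet {G X : Type*} [Group G] [MulAction G X] {k : ℕ} (A : Fin k → Set X)
    (D : Set X) (J : Set G) : Prop :=
  IndepRel A (fun _ => D) J

/-- The maximum of `|F ∩ J|` over independence sets `J` for `A` relative to `D`. -/
noncomputable def maxIndep {G X : Type*} [Group G] [MulAction G X] {k : ℕ}
    (A : Fin k → Set X) (D : G → Set X) (F : Finset G) : ℕ :=
  sSup {m : ℕ | ∃ J : Set G, IndepRel A D J ∧ m = (((F : Set G)) ∩ J).ncard}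

/-- `φ_{A,δ}(F)`: the minimum over Borel sets `D` with `μ(D) ≥ 1 - δ` of the maximum
of `|F ∩ J|` over independence sets `J` for `A` relative to `D`. -/
noncomputable def phiConst {G X : Type*} [Group G] [MulAction G X] [MeasurableSpace X]
    (μ : Measure X) {k : ℕ} (A : Fin k → Set X) (δ : ℝ) (F : Finset G) : ℕ :=
  sInf {m : ℕ | ∃ D : Set X, MeasurableSet D ∧ 1 - δ ≤ (μ D).toReal ∧
    m = maxIndep A (fun _ : G => D) F}

/-- `φ'_{A,δ}(F)`: as `phiConst` but with maps `D : G → Set X` with `μ(D s) ≥ 1 - δ`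
for all `s`. -/
noncomputable def phiMap {G X : Type*} [Group G] [MulAction G X] [MeasurableSpace X]
    (μ : Measure X) {k : ℕ} (A : Fin k → Set X) (δ : ℝ) (F : Finset G) : ℕ :=
  sInf {m : ℕ | ∃ D : G → Set X, (∀ s, MeasurableSet (D s)) ∧
    (∀ s, 1 - δ ≤ (μ (D s)).toReal) ∧ m = maxIndep A D F}

/-- The upper `μ`-independence density `Ī_μ(A)` of the tuple `A`. -/
noncomputable def upperIndepDens (G : Type*) {X : Type*} [Group G] [MulAction G X]
    [MeasurableSpace X] (μ : Measure X) {k : ℕ} (A : Fin k → Set X) : ℝ :=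
  ⨆ δ : {d : ℝ // 0 < d}, invLimsup (fun F : Finset G => (phiConst μ A δ.1 F : ℝ))

/-- The lower `μ`-independence density `I̲_μ(A)` of the tuple `A`. -/
noncomputable def lowerIndepDens (G : Type*) {X : Type*} [Group G] [MulAction G X]
    [MeasurableSpace X] (μ : Measure X) {k : ℕ} (A : Fin k → Set X) : ℝ :=
  ⨆ δ : {d : ℝ // 0 < d}, invLiminf (fun F : Finset G => (phiConst μ A δ.1 F : ℝ))

/-- The measure `μ` is invariant under the action of `G`. -/
def InvariantMeasure (G : Type*) {X : Type*} [Group G] [MulAction G X] [MeasurableSpace X]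
    (μ : Measure X) : Prop :=
  ∀ (s : G) (B : Set X), MeasurableSet B → μ ((fun x => s • x) ⁻¹' B) = μ B

/-- The entropy `H_μ(𝒫^F)` of the join `⋁_{s ∈ F} s⁻¹𝒫` of the finite partition `P`. -/
noncomputable def HJoin {G X : Type*} [Group G] [MulAction G X] [MeasurableSpace X]
    (μ : Measure X) {k : ℕ} (P : Fin k → Set X) (F : Finset G) : ℝ :=
  ∑ f : ↥F → Fin k,
    Real.negMulLog (μ (⋂ s : ↥F, (fun x => (s : G) • x) ⁻¹' P (f s))).toReal

/-- `P` is a finite measurable partition of `X` (members may be empty). -/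
def IsMeasPartition {X : Type*} [MeasurableSpace X] {k : ℕ} (P : Fin k → Set X) : Prop :=
  (∀ i, MeasurableSet (P i)) ∧ (Pairwise fun i j => Disjoint (P i) (P j)) ∧
    (⋃ i, P i) = Set.univ

/-- `x` is a (topological) IE-tuple for the action of `G` on `X`. -/
def IsIETuple (G : Type*) {X : Type*} [Group G] [TopologicalSpace X] [MulAction G X]
    {k : ℕ} (x : Fin k → X) : Prop :=
  ∀ U : Fin k → Set X, (∀ i, U i ∈ nhds (x i)) →
    ∃ d : ℝ, 0 < d ∧ ∀ (K : Finset G) (δ : ℝ), 0 < δ →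
      ∃ (F : Finset G) (J : Set G), FolnerInv K δ F ∧ IndepSet U (Set.univ : Set X) J ∧
        d * (F.card : ℝ) ≤ (((F : Set G)) ∩ J).ncard

/-- `x` is a `μ`-IE-tuple. -/
def IsMuIETuple (G : Type*) {X : Type*} [Group G] [TopologicalSpace X] [MulAction G X]
    [MeasurableSpace X] (μ : Measure X) {k : ℕ} (x : Fin k → X) : Prop :=
  ∀ U : Fin k → Set X, (∀ i, U i ∈ nhds (x i)) → 0 < upperIndepDens G μ U

/-!
A tuple of sets has positive upper `μ`-independence density if and only if it is uniformly
independent: for some `c, δ > 0`, every nonempty finite `F ⊆ G`, however far from being invariant,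
contains an independence set with at least `c * |F|` elements relative to any given `D` with
`μ D ≥ 1 - δ`. To go from a sufficiently invariant set to an arbitrary
finite set, average over the translates of the latter by elements of the former.

Uniform independence passes to factors, and it passes to products: find an independence set in the
first coordinate, and inside it one in the second. By Fubini and Markov this can be done so that
most of the points obtained lie in the given subset of `X × Y`.

In both arguments one is left with most, not all, of the words on a finite set `J`. These suffice
by a shattering lemma of Sauer–Shelah type: a family containing most words on `J` restricts to all
words on a subset of `J` of definite proportion.
-/

section Shattering

variable {ι α : Type*}

/-- A finite family `A` of words `ι → α` shatters the set `J` of coordinates if every word agrees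
on `J` with a member of `A`. For `α = Bool` this is `Finset.Shatters`, up to the identification of
words with sets. -/
def WordShatters (A : Finset (ι → α)) (J : Finset ι) : Prop :=
  ∀ τ : ι → α, ∃ w ∈ A, EqOn w τ J

theorem wordShatters_empty {A : Finset (ι → α)} (hA : A.Nonempty) : WordShatters A ∅ := by
  obtain ⟨w, hw⟩ := hA
  exact fun τ => ⟨w, hw, by simp⟩

variable [Fintype ι] [DecidableEq ι] [Fintype α]

theorem WordShatters.of_exists_update {A : Finset (ι → α)} {j : ι} {I : Finset ι} (hj : j ∉ I)
    (h : WordShatters {w | ∃ a, Function.update w j a ∈ A} I) : WordShatters A I := by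
  intro τ
  obtain ⟨w, hw, hwτ⟩ := h τ
  obtain ⟨a, ha⟩ := (Finset.mem_filter.mp hw).2
  refine ⟨_, ha, fun i hi => ?_⟩
  have hij : i ≠ j := ne_of_mem_of_not_mem hi hj
  rw [Function.update_of_ne hij, hwτ hi]

theorem WordShatters.insert_of_forall_update {A : Finset (ι → α)} {j : ι} {I : Finset ι}
    (h : WordShatters {w | ∀ a, Function.update w j a ∈ A} I) : WordShatters A (insert j I) := by
  intro τ
  obtain ⟨w, hw, hwτ⟩ := h τ
  refine ⟨_, (Finset.mem_filter.mp hw).2 (τ j), fun i hi => ?_⟩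
  rcases eq_or_ne i j with rfl | hij
  · exact Function.update_self ..
  · rw [Function.update_of_ne hij]
    exact hwτ ((Finset.mem_insert.mp hi).resolve_left hij)

theorem sum_card_filter_update_mem (A : Finset (ι → α)) (j : ι) :
    ∑ w : ι → α, (Finset.univ.filter fun a => Function.update w j a ∈ A).card
      = Fintype.card α * A.card := by
  have hinv : Function.Involutive
      fun p : (ι → α) × α => (Function.update p.1 j p.2, p.1 j) := by
    rintro ⟨w, a⟩
    simp
  have hswap : ∑ p : (ι → α) × α, (if Function.update p.1 j p.2 ∈ A then 1 else 0)
      = ∑ p : (ι → α) × α, (if p.1 ∈ A then 1 else 0) :=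
    Fintype.sum_equiv hinv.toPerm _ _ fun _ => rfl
  simp only [Finset.card_filter]
  rw [← Fintype.sum_prod_type', hswap, Fintype.sum_prod_type_right]
  simp

theorem card_mul_card_le_of_update [Nonempty α] (A : Finset (ι → α)) (j : ι) :
    (Fintype.card α : ℝ) * A.card
      ≤ (Fintype.card α - 1)
          * (Finset.univ.filter fun w => ∃ a, Function.update w j a ∈ A).card
        + (Finset.univ.filter fun w => ∀ a, Function.update w j a ∈ A).card := by
  have hfibre (w : ι → α) : ((Finset.univ.filter fun a => Function.update w j a ∈ A).card : ℝ)
      ≤ (Fintype.card α - 1) * (if ∃ a, Function.update w j a ∈ A then 1 else 0)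
        + (if ∀ a, Function.update w j a ∈ A then 1 else 0) := by
    by_cases hex : ∃ a, Function.update w j a ∈ A
    · by_cases hall : ∀ a, Function.update w j a ∈ A
      · simp [hall]
      · have hlt : (Finset.univ.filter fun a => Function.update w j a ∈ A).card
            < Fintype.card α := by
          rw [← Finset.card_univ]
          exact Finset.card_lt_card (by simpa [Finset.filter_ssubset] using hall)
        have hlt' : ((Finset.univ.filter fun a => Function.update w j a ∈ A).card : ℝ) + 1
            ≤ Fintype.card α := by exact_mod_cast hlt
        rw [if_pos hex, if_neg hall]
        linarith
    · have hnone : ∀ a, Function.update w j a ∉ A := not_exists.mp hex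
      simp [hnone]
  calc (Fintype.card α : ℝ) * A.card
      = ∑ w : ι → α, ((Finset.univ.filter fun a => Function.update w j a ∈ A).card : ℝ) := by
        exact_mod_cast (sum_card_filter_update_mem A j).symm
    _ ≤ _ := Finset.sum_le_sum fun w _ => hfibre w
    _ = _ := by rw [Finset.sum_add_distrib, ← Finset.mul_sum]; simp

/-- The excess of the density of `A` over `1 - 1 / |α|`, the largest density of a family that
does not shatter a given coordinate. -/
noncomputable def densExcess (A : Finset (ι → α)) : ℝ :=
  A.dens - (1 - 1 / (Fintype.card α : ℝ))

theorem card_mul_densExcess_le_one [Nonempty α] (A : Finset (ι → α)) :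
    Fintype.card α * densExcess A ≤ 1 := by
  have hdens : (A.dens : ℝ) ≤ 1 := mod_cast Finset.dens_le_one
  calc Fintype.card α * densExcess A ≤ Fintype.card α * (1 / Fintype.card α) := by
        gcongr
        rw [densExcess]
        linarith
    _ = 1 := mul_one_div_cancel (by simp)

theorem card_mul_densExcess_le_of_update [Nonempty α] (A : Finset (ι → α)) (j : ι) :
    Fintype.card α * densExcess A
      ≤ (Fintype.card α - 1)
          * densExcess (Finset.univ.filter fun w => ∃ a, Function.update w j a ∈ A)
        + densExcess (Finset.univ.filter fun w => ∀ a, Function.update w j a ∈ A) := by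
  have hdens : (Fintype.card α : ℝ) * A.dens
      ≤ (Fintype.card α - 1)
          * (Finset.univ.filter fun w => ∃ a, Function.update w j a ∈ A).dens
        + (Finset.univ.filter fun w => ∀ a, Function.update w j a ∈ A).dens := by
    simp only [Finset.nnratCast_dens, mul_div_assoc', ← add_div]
    gcongr
    exact card_mul_card_le_of_update A j
  simp only [densExcess]
  linear_combination hdens

theorem nonempty_forall_update_of_densExcess_pos [Nonempty α] {A : Finset (ι → α)}
    (hA : 0 < densExcess A) (j : ι) :
    (Finset.univ.filter fun w => ∀ a, Function.update w j a ∈ A).Nonempty := by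
  by_contra hempty
  have hrec := card_mul_densExcess_le_of_update A j
  have hα : (1 : ℝ) ≤ Fintype.card α := Nat.one_le_cast.mpr Fintype.card_pos
  have hone :=
    card_mul_densExcess_le_one (Finset.univ.filter fun w => ∃ a, Function.update w j a ∈ A)
  rw [Finset.not_nonempty_iff_eq_empty.mp hempty] at hrec
  have hnull : densExcess (∅ : Finset (ι → α)) = 1 / (Fintype.card α : ℝ) - 1 := by
    simp [densExcess]
  have hinv : (Fintype.card α : ℝ) * (1 / Fintype.card α) = 1 := mul_one_div_cancel (by simp)
  have hprod := mul_le_mul_of_nonneg_left hone (sub_nonneg.mpr hα)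
  nlinarith [mul_pos (zero_lt_one.trans_le hα) hA]

/- A random subset of `J` that contains each point with probability `1 / |α|` has `|J| / |α|`
points on average, and the recursion above says that it is shattered with probability at least
`dens A`. Discarding the subsets that are not shattered leaves an average of at least
`|J| / |α| - |J| * (1 - dens A) = |J| * densExcess A`. -/
theorem exists_wordShatters_card_mul_densExcess_le [Nonempty α] {A : Finset (ι → α)}
    (hA : A.Nonempty) (J : Finset ι) :
    ∃ I ⊆ J, WordShatters A I ∧ (J.card : ℝ) * densExcess A ≤ I.card := by
  induction J using Finset.induction_on generalizing A with
  | empty => exact ⟨∅, subset_rfl, wordShatters_empty hA, by simp⟩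
  | insert j J hj ih =>
    rcases le_or_gt (densExcess A) 0 with hle | hpos
    · exact ⟨∅, Finset.empty_subset _, wordShatters_empty hA,
        by simpa using mul_nonpos_of_nonneg_of_nonpos (Nat.cast_nonneg _) hle⟩
    set m : ℝ := (Fintype.card α : ℝ)
    have hm : 1 ≤ m := Nat.one_le_cast.mpr Fintype.card_pos
    have hforall := nonempty_forall_update_of_densExcess_pos hpos j
    have hexists : (Finset.univ.filter fun w => ∃ a, Function.update w j a ∈ A).Nonempty :=
      hforall.mono <| Finset.monotone_filter_right _ fun w _ hw => ⟨_, hw (Classical.arbitrary α)⟩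
    obtain ⟨I₁, hI₁J, hI₁, hI₁_card⟩ := ih hexists
    obtain ⟨I₂, hI₂J, hI₂, hI₂_card⟩ := ih hforall
    have hmean : m * ((J.card + 1) * densExcess A) ≤ (m - 1) * I₁.card + (I₂.card + 1) := by
      have hrec := mul_le_mul_of_nonneg_left (card_mul_densExcess_le_of_update A j)
        J.card.cast_nonneg
      have hone := card_mul_densExcess_le_one A
      have hscaled := mul_le_mul_of_nonneg_left hI₁_card (sub_nonneg.mpr hm)
      linarith
    rw [Finset.card_insert_of_notMem hj, Nat.cast_succ]
    by_cases hlarge : (J.card + 1) * densExcess A ≤ I₁.card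
    · exact ⟨I₁, hI₁J.trans (Finset.subset_insert _ _),
        hI₁.of_exists_update fun h => hj (hI₁J h), hlarge⟩
    · refine ⟨insert j I₂, Finset.insert_subset_insert _ hI₂J, hI₂.insert_of_forall_update, ?_⟩
      rw [Finset.card_insert_of_notMem fun h => hj (hI₂J h), Nat.cast_succ]
      have hscaled := mul_le_mul_of_nonneg_left (not_le.mp hlarge).le (sub_nonneg.mpr hm)
      linarith

theorem exists_wordShatters_image_comp [Nonempty α] {κ : Type*} [Fintype κ] {e : κ → ι}
    (he : Function.Injective e) {A : Finset (ι → α)} (hA : A.Nonempty) :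
    ∃ u : Finset κ, WordShatters (A.image (· ∘ e)) u ∧
      (Fintype.card κ : ℝ) * densExcess A ≤ u.card := by
  obtain ⟨I, hI, hAI, hI_card⟩ :=
    exists_wordShatters_card_mul_densExcess_le hA (Finset.univ.map ⟨e, he⟩)
  obtain ⟨u, -, rfl⟩ := Finset.subset_map_iff.mp hI
  refine ⟨u, fun σ => ?_, by simpa using hI_card⟩
  obtain ⟨w, hw, hwσ⟩ := hAI (Function.extend e σ fun _ => Classical.arbitrary α)
  refine ⟨w ∘ e, Finset.mem_image_of_mem _ hw, fun s hs => ?_⟩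
  rw [Function.comp_apply, hwσ (by simpa using ⟨s, hs, rfl⟩), he.extend_apply]

end Shattering

section Averaging

theorem exists_le_and_le_of_card_mul_le_sum {ι : Type*} {S : Finset ι} (hS : S.Nonempty)
    {f g : ι → ℝ} {a b ε : ℝ} (ha : 0 ≤ a) (hε : 0 < ε) (hf_le : ∀ t ∈ S, f t ≤ 1)
    (hg_le : ∀ t ∈ S, g t ≤ 1) (hf : S.card * (a + b) ≤ ∑ t ∈ S, f t)
    (hg : S.card * (1 - ε * b) ≤ ∑ t ∈ S, g t) :
    ∃ t ∈ S, a ≤ f t ∧ 1 - ε ≤ g t := by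
  have hsum : ∑ _t ∈ S, (ε * a + 1) ≤ ∑ t ∈ S, (ε * f t + g t) := by
    rw [Finset.sum_const, nsmul_eq_mul, Finset.sum_add_distrib, ← Finset.mul_sum]
    linarith [mul_le_mul_of_nonneg_left hf hε.le]
  obtain ⟨t, ht, hle⟩ := Finset.exists_le_of_sum_le hS hsum
  refine ⟨t, ht, le_of_mul_le_mul_left ?_ hε, ?_⟩
  · linarith [hg_le t ht]
  · linarith [mul_nonneg hε.le ha, mul_le_mul_of_nonneg_left (hf_le t ht) hε.le]

theorem mul_card_le_card_filter_prod_arrow {ι α β : Type*} [Fintype ι] [DecidableEq ι] [Fintype α]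
    [Fintype β] {P : (ι → α) → (ι → β) → Prop} {r : ℝ}
    (h : ∀ τ, r * Fintype.card (ι → α) ≤ (Finset.univ.filter fun σ => P σ τ).card) :
    r * Fintype.card (ι → α × β)
      ≤ (Finset.univ.filter fun w : ι → α × β => P (Prod.fst ∘ w) (Prod.snd ∘ w)).card := by
  have hcard : (Finset.univ.filter fun w : ι → α × β => P (Prod.fst ∘ w) (Prod.snd ∘ w)).card
      = ∑ τ, (Finset.univ.filter fun σ => P σ τ).card := by
    simp only [Finset.card_filter]
    rw [← Fintype.sum_prod_type_right']
    exact Fintype.sum_equiv (Equiv.arrowProdEquivProdArrow _ _ _) _ _ fun _ => rfl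
  rw [hcard, Fintype.card_congr (Equiv.arrowProdEquivProdArrow _ _ _), Fintype.card_prod,
    Nat.cast_mul, Nat.cast_sum, ← mul_assoc, mul_comm _ (Fintype.card (ι → β) : ℝ), ← nsmul_eq_mul]
  exact Finset.card_nsmul_le_sum _ _ _ fun τ _ => h τ

variable {X Y T : Type*} [MeasurableSpace X] [MeasurableSpace Y] {μ : Measure X}
  [IsProbabilityMeasure μ]

/- Markov's inequality for `1 - g`. -/
theorem exists_measurableSet_le_of_le_integral {g : X → ℝ} (hg : Measurable g)
    (hg_int : Integrable g μ) (hg_le : ∀ x, g x ≤ 1) {η δ : ℝ} (hη : 0 < η)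
    (h : 1 - η * δ ≤ ∫ x, g x ∂μ) :
    ∃ D : Set X, MeasurableSet D ∧ 1 - δ ≤ μ.real D ∧ ∀ x ∈ D, 1 - η ≤ g x := by
  have hbad : MeasurableSet {x | η ≤ 1 - g x} :=
    measurableSet_le measurable_const (measurable_const.sub hg)
  have hmarkov : η * μ.real {x | η ≤ 1 - g x} ≤ 1 - ∫ x, g x ∂μ := by
    simpa [integral_sub (integrable_const 1) hg_int] using
      mul_meas_ge_le_integral_of_nonneg
        (Filter.Eventually.of_forall fun x => sub_nonneg.mpr (hg_le x))
        ((integrable_const 1).sub hg_int) η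
  refine ⟨{x | η ≤ 1 - g x}ᶜ, hbad.compl, ?_, fun x hx => ?_⟩
  · have hδ : μ.real {x | η ≤ 1 - g x} ≤ δ := le_of_mul_le_mul_left (by linarith) hη
    rw [probReal_compl_eq_one_sub hbad]
    linarith
  · have hlt : 1 - g x < η := not_le.mp hx
    linarith

theorem exists_measurableSet_le_card_filter_mem {S : Finset T} (hS : S.Nonempty) {E : T → Set X}
    (hE : ∀ t ∈ S, MeasurableSet (E t)) {η δ : ℝ} (hη : 0 < η)
    (h : ∀ t ∈ S, 1 - η * δ ≤ μ.real (E t)) :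
    ∃ D : Set X, MeasurableSet D ∧ 1 - δ ≤ μ.real D ∧
      ∀ x ∈ D, (1 - η) * S.card ≤ (S.filter fun t => x ∈ E t).card := by
  have hS_pos : (0 : ℝ) < S.card := mod_cast hS.card_pos
  set g : X → ℝ := fun x => (∑ t ∈ S, (E t).indicator 1 x) / S.card
  have hcount (x : X) : g x = (S.filter fun t => x ∈ E t).card / S.card := by
    simp [g, Set.indicator_apply]
  have hle (x : X) : g x ≤ 1 := by
    rw [hcount]
    exact div_le_one_of_le₀ (mod_cast Finset.card_filter_le _ _) hS_pos.le
  have hint (t : T) (ht : t ∈ S) : Integrable ((E t).indicator (1 : X → ℝ)) μ :=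
    (integrable_const 1).indicator (hE t ht)
  have hmean : 1 - η * δ ≤ ∫ x, g x ∂μ := by
    rw [integral_div, integral_finsetSum _ hint, le_div_iff₀ hS_pos, mul_comm, ← nsmul_eq_mul]
    refine Finset.card_nsmul_le_sum _ _ _ fun t ht => ?_
    rw [integral_indicator_one (hE t ht)]
    exact h t ht
  obtain ⟨D, hD, hDμ, hDg⟩ := exists_measurableSet_le_of_le_integral
    ((Finset.measurable_sum _ fun t ht => measurable_one.indicator (hE t ht)).div_const _)
    ((integrable_finsetSum _ hint).div_const _)
    hle hη hmean
  refine ⟨D, hD, hDμ, fun x hx => ?_⟩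
  rw [← le_div_iff₀ hS_pos, ← hcount]
  exact hDg x hx

theorem exists_measurableSet_le_section {ν : Measure Y} [IsProbabilityMeasure ν]
    {D : Set (X × Y)} (hD : MeasurableSet D) {η δ : ℝ} (hη : 0 < η)
    (h : 1 - η * δ ≤ (μ.prod ν).real D) :
    ∃ D₁ : Set X, MeasurableSet D₁ ∧ 1 - δ ≤ μ.real D₁ ∧
      ∀ x ∈ D₁, 1 - η ≤ ν.real (Prod.mk x ⁻¹' D) := by
  have hmeas : Measurable fun x => ν (Prod.mk x ⁻¹' D) := measurable_measure_prodMk_left hD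
  refine exists_measurableSet_le_of_le_integral hmeas.ennreal_toReal
    (Measure.integrable_measure_prodMk_left hD (measure_ne_top _ _)) (fun _ => measureReal_le_one)
    hη ?_
  rwa [measureReal_def, Measure.prod_apply hD, ← integral_toReal hmeas.aemeasurable
    (Filter.Eventually.of_forall fun _ => measure_lt_top _ _)] at h

end Averaging

section UniformIndependence

variable {G X Y α β : Type*} [SMul G X] [SMul G Y]

/-- `J` is an independence set for the family `A` of subsets of `X` relative to `D`. For nonempty
`J` this is `IndepSet`, with an arbitrary index type in place of `Fin k`; only the assignments on
the whole of `J` are considered, since these can be restricted to subsets. -/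
def IndepFinset (A : α → Set X) (D : Set X) (J : Finset G) : Prop :=
  ∀ σ : J → α, ∃ x ∈ D, ∀ s : J, (s : G) • x ∈ A (σ s)

/-- The family `A` is uniformly independent for `μ`: for some `c, δ > 0`, every nonempty finite
`F ⊆ G` contains, for each measurable `D` with `μ D ≥ 1 - δ`, an independence set for `A` relative
to `D` with at least `c * |F|` elements. There is no condition on the invariance of `F`. -/
def UniformlyIndep (G : Type*) {X α : Type*} [SMul G X] [MeasurableSpace X] (μ : Measure X)
    (A : α → Set X) : Prop :=
  ∃ c > (0 : ℝ), ∃ δ > (0 : ℝ), ∀ F : Finset G, F.Nonempty → ∀ D, MeasurableSet D →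
    1 - δ ≤ μ.real D → ∃ J ⊆ F, c * F.card ≤ J.card ∧ IndepFinset A D J

theorem IndepFinset.comp_subset {A : α → Set X} {B : β → Set X} {D : Set X} {J : Finset G}
    (h : IndepFinset A D J) (f : β → α) (hAB : ∀ b, A (f b) ⊆ B b) : IndepFinset B D J := by
  intro σ
  obtain ⟨x, hxD, hx⟩ := h (f ∘ σ)
  exact ⟨x, hxD, fun s => hAB _ (hx s)⟩

theorem IndepFinset.map {V : α → Set Y} {D : Set Y} {J : Finset G} (π : X →[G] Y)
    (h : IndepFinset (fun a => π ⁻¹' V a) (π ⁻¹' D) J) : IndepFinset V D J := by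
  intro σ
  obtain ⟨x, hxD, hx⟩ := h σ
  exact ⟨π x, hxD, fun s => by simpa only [mem_preimage, map_smul] using hx s⟩

theorem exists_indepFinset_of_le_card_filter_mem {ι : Type*} [Fintype ι] [DecidableEq ι] [Fintype α]
    [Nonempty α] {A : α → Set X} {D : Set X} {K : Finset G} {e : K → ι} (he : Function.Injective e)
    {p : (ι → α) → X} (hp : ∀ w (s : K), (s : G) • p w ∈ A (w (e s)))
    (hD : (1 - 1 / (2 * Fintype.card α : ℝ)) * Fintype.card (ι → α)
      ≤ (Finset.univ.filter fun w => p w ∈ D).card) :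
    ∃ I ⊆ K, (K.card : ℝ) / (2 * Fintype.card α) ≤ I.card ∧ IndepFinset A D I := by
  set W : Finset (ι → α) := {w | p w ∈ D}
  have hα : (1 : ℝ) ≤ Fintype.card α := Nat.one_le_cast.mpr Fintype.card_pos
  have hdens : 1 - 1 / (2 * Fintype.card α : ℝ) ≤ W.dens := by
    rwa [Finset.nnratCast_dens, le_div_iff₀ (Nat.cast_pos.mpr Fintype.card_pos)]
  have hW : W.Nonempty := by
    have hlt : 1 / (2 * Fintype.card α : ℝ) < 1 := by
      rw [div_lt_one (by positivity)]
      linarith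
    exact Finset.dens_pos.mp (by exact_mod_cast (sub_pos.mpr hlt).trans_le hdens)
  have hexcess : 1 / (2 * Fintype.card α : ℝ) ≤ densExcess W := by
    have hhalf : 1 / (Fintype.card α : ℝ) = 2 * (1 / (2 * Fintype.card α)) := by field_simp
    rw [densExcess]
    linarith
  obtain ⟨u, hu, hu_card⟩ := exists_wordShatters_image_comp he hW
  refine ⟨u.map (Function.Embedding.subtype _), Finset.map_subtype_subset u, ?_, fun σ => ?_⟩
  · rw [Finset.card_map, div_eq_mul_one_div]
    rw [Fintype.card_coe] at hu_card
    exact (mul_le_mul_of_nonneg_left hexcess (Nat.cast_nonneg _)).trans hu_card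
  · obtain ⟨_, hv, hvσ⟩ := hu fun s =>
      if hs : (s : G) ∈ u.map (Function.Embedding.subtype _) then σ ⟨s, hs⟩
      else Classical.arbitrary α
    obtain ⟨w, hwW, rfl⟩ := Finset.mem_image.mp hv
    refine ⟨p w, (Finset.mem_filter.mp hwW).2, fun ⟨s, hs⟩ => ?_⟩
    obtain ⟨t, ht, rfl⟩ := Finset.mem_map.mp hs
    have hwt : w (e t) = σ ⟨t, hs⟩ := (hvσ ht).trans (dif_pos hs)
    exact hwt ▸ hp w t

variable [MeasurableSpace X] [MeasurableSpace Y] {μ : Measure X} {ν : Measure Y}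

theorem UniformlyIndep.comp_subset {A : α → Set X} {B : β → Set X} (h : UniformlyIndep G μ A)
    (f : β → α) (hAB : ∀ b, A (f b) ⊆ B b) : UniformlyIndep G μ B := by
  obtain ⟨c, hc, δ, hδ, h⟩ := h
  refine ⟨c, hc, δ, hδ, fun F hF D hD hDμ => ?_⟩
  obtain ⟨J, hJF, hJ_card, hJ⟩ := h F hF D hD hDμ
  exact ⟨J, hJF, hJ_card, hJ.comp_subset f hAB⟩

theorem UniformlyIndep.map {V : α → Set Y} (π : X →[G] Y) (hπ : MeasurePreserving π μ ν)
    (h : UniformlyIndep G μ fun a => π ⁻¹' V a) : UniformlyIndep G ν V := by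
  obtain ⟨c, hc, δ, hδ, h⟩ := h
  refine ⟨c, hc, δ, hδ, fun F hF D hD hDν => ?_⟩
  obtain ⟨J, hJF, hJ_card, hJ⟩ := h F hF (π ⁻¹' D) (hπ.measurable hD)
    (by rwa [hπ.measureReal_preimage hD.nullMeasurableSet])
  exact ⟨J, hJF, hJ_card, hJ.map π⟩

/- Fubini provides a set `D₁` of points of `X` with large sections of `D`, and Markov a set `D₂` of
points of `Y` that see most of the points `x σ ∈ D₁` realising an independence set `J₁`. For an
independence set `J₂ ⊆ J₁` relative to `D₂`, most of the points `(x σ, y τ)` then lie in `D`, and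
the words `(σ, τ)` for which they do shatter a large part of `J₂`. -/
theorem UniformlyIndep.prod [Finite α] [Nonempty α] [Finite β] [Nonempty β]
    [IsProbabilityMeasure μ] [IsProbabilityMeasure ν] {U : α → Set X} {V : β → Set Y}
    (hU : UniformlyIndep G μ U) (hV : UniformlyIndep G ν V) :
    UniformlyIndep G (μ.prod ν) fun i : α × β => U i.1 ×ˢ V i.2 := by
  have := Fintype.ofFinite α
  have := Fintype.ofFinite β
  obtain ⟨c₁, hc₁, δ₁, hδ₁, hU⟩ := hU
  obtain ⟨c₂, hc₂, δ₂, hδ₂, hV⟩ := hV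
  set m : ℝ := 2 * Fintype.card (α × β)
  have : 0 < m := by positivity
  refine ⟨c₂ * c₁ / m, by positivity, 1 / m * δ₂ * δ₁, by positivity, fun F hF D hD hDμ => ?_⟩
  obtain ⟨D₁, hD₁, hD₁μ, hsection⟩ :=
    exists_measurableSet_le_section hD (by positivity : 0 < 1 / m * δ₂) hDμ
  obtain ⟨J₁, hJ₁F, hJ₁_card, hJ₁⟩ := hU F hF D₁ hD₁ hD₁μ
  choose x hxD₁ hxU using hJ₁
  obtain ⟨D₂, hD₂, hD₂ν, hfreq⟩ := exists_measurableSet_le_card_filter_mem (μ := ν)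
    (Finset.univ_nonempty (α := J₁ → α)) (fun σ _ => measurable_prodMk_left hD)
    (by positivity : 0 < 1 / m) fun σ _ => hsection (x σ) (hxD₁ σ)
  have hJ₁_nonempty : J₁.Nonempty := by
    have : (0 : ℝ) < J₁.card := (mul_pos hc₁ (mod_cast hF.card_pos)).trans_le hJ₁_card
    exact Finset.card_pos.mp (mod_cast this)
  obtain ⟨J₂, hJ₂J₁, hJ₂_card, hJ₂⟩ := hV J₁ hJ₁_nonempty D₂ hD₂ hD₂ν
  choose y hyD₂ hyV using hJ₂
  set incl : J₂ → J₁ := Set.inclusion hJ₂J₁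
  let p (w : J₁ → α × β) : X × Y := (x (Prod.fst ∘ w), y (Prod.snd ∘ w ∘ incl))
  have hp (w : J₁ → α × β) (s : J₂) : (s : G) • p w ∈ U (w (incl s)).1 ×ˢ V (w (incl s)).2 :=
    ⟨hxU (Prod.fst ∘ w) (incl s), hyV (Prod.snd ∘ w ∘ incl) s⟩
  obtain ⟨I, hIJ₂, hI_card, hI⟩ := exists_indepFinset_of_le_card_filter_mem
    (A := fun i : α × β => U i.1 ×ˢ V i.2) (Set.inclusion_injective hJ₂J₁) hp
    (mul_card_le_card_filter_prod_arrow (P := fun σ τ => (x σ, y (τ ∘ incl)) ∈ D)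
      fun τ => hfreq _ (hyD₂ _))
  refine ⟨I, hIJ₂.trans (hJ₂J₁.trans hJ₁F), le_trans ?_ hI_card, hI⟩
  calc c₂ * c₁ / m * F.card = c₂ * (c₁ * F.card) / m := by ring
    _ ≤ c₂ * J₁.card / m := by gcongr
    _ ≤ J₂.card / m := by gcongr

end UniformIndependence

section Folner

variable {G : Type*} [Group G]

/- All but `ε * |F|` of the points of `J` belong to exactly `|F'|` of the translates `F' * t` with
`t ∈ F`. -/
theorem FolnerInv.card_mul_le_sum {F F' J : Finset G} {ε : ℝ}
    (hF : FolnerInv (F'.image (·⁻¹)) ε F) (hJF : J ⊆ F) :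
    (F'.card : ℝ) * (J.card - ε * F.card)
      ≤ ∑ t ∈ F, ((F'.filter fun f => f * t ∈ J).card : ℝ) := by
  set core : Finset G := {s ∈ F | ∀ g ∈ F'.image (·⁻¹), g * s ∈ F}
  have hcore : (1 - ε) * (F.card : ℝ) ≤ core.card := by
    have hcoe : (core : Set G) = (F : Set G) ∩ {s : G | ∀ g ∈ F'.image (·⁻¹), g * s ∈ F} := by
      ext
      simp [core]
    rw [← Set.ncard_coe_finset core, hcoe]
    exact hF.2
  have hinter : (J.card : ℝ) - ε * F.card ≤ (J ∩ core).card := by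
    have hunion : ((J ∪ core).card : ℝ) ≤ F.card :=
      mod_cast Finset.card_le_card (Finset.union_subset hJF (Finset.filter_subset _ _))
    have hadd : ((J ∪ core).card : ℝ) + (J ∩ core).card = J.card + core.card :=
      mod_cast Finset.card_union_add_card_inter J core
    linarith
  have htranslate : ∀ f ∈ F', (J ∩ core).card ≤ (F.filter fun t => f * t ∈ J).card := by
    refine fun f hf => Finset.card_le_card_of_injOn (f⁻¹ * ·) (fun s hs => ?_)
      (mul_right_injective _).injOn
    obtain ⟨hsJ, hs_core⟩ := Finset.mem_inter.mp (Finset.mem_coe.mp hs)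
    have hfs : f⁻¹ * s ∈ F := (Finset.mem_filter.mp hs_core).2 _ (Finset.mem_image_of_mem _ hf)
    simp [hfs, hsJ]
  have hswap : ∑ f ∈ F', (F.filter fun t => f * t ∈ J).card
      = ∑ t ∈ F, (F'.filter fun f => f * t ∈ J).card :=
    Finset.sum_card_bipartiteAbove_eq_sum_card_bipartiteBelow _
  calc (F'.card : ℝ) * (J.card - ε * F.card) ≤ F'.card * (J ∩ core).card := by gcongr
    _ ≤ _ := mod_cast hswap ▸ Finset.card_nsmul_le_sum F' _ _ htranslate

theorem FolnerInv.exists_mul_card_le_and_mul_card_le {Ω : Type*} [Fintype Ω] [Nonempty Ω]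
    {P : G → Ω → Prop} {F F' J : Finset G} {a b ε : ℝ} (ha : 0 ≤ a) (hε : 0 < ε)
    (hF' : F'.Nonempty) (hF : FolnerInv (F'.image (·⁻¹)) b F) (hJF : J ⊆ F)
    (hJ : (a + b + b) * F.card ≤ J.card)
    (hP : ∀ ω, (1 - ε * b) * F.card ≤ (F.filter fun t => P t ω).card) :
    ∃ t, a * F'.card ≤ (F'.filter fun f => f * t ∈ J).card ∧
      (1 - ε) * Fintype.card Ω ≤ (Finset.univ.filter fun ω => P t ω).card := by
  have hF'_card : (0 : ℝ) < F'.card := mod_cast hF'.card_pos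
  have hΩ : (0 : ℝ) < Fintype.card Ω := mod_cast Fintype.card_pos
  have htranslates :
      F.card * (a + b) ≤ ∑ t ∈ F, ((F'.filter fun f => f * t ∈ J).card : ℝ) / F'.card := by
    rw [← Finset.sum_div, le_div_iff₀' hF'_card]
    refine le_trans ?_ (hF.card_mul_le_sum hJF)
    gcongr
    linarith
  have hpoints : F.card * (1 - ε * b)
      ≤ ∑ t ∈ F, ((Finset.univ.filter fun ω => P t ω).card : ℝ) / Fintype.card Ω := by
    have hswap : ∑ t ∈ F, (Finset.univ.filter fun ω => P t ω).card
        = ∑ ω, (F.filter fun t => P t ω).card :=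
      Finset.sum_card_bipartiteAbove_eq_sum_card_bipartiteBelow _
    rw [← Finset.sum_div, le_div_iff₀' hΩ, ← nsmul_eq_mul, ← Nat.cast_sum, hswap, Nat.cast_sum,
      mul_comm (F.card : ℝ)]
    exact Finset.card_nsmul_le_sum _ _ _ fun ω _ => hP ω
  obtain ⟨t, -, hft, hgt⟩ := exists_le_and_le_of_card_mul_le_sum hF.1 ha hε
    (fun t _ => div_le_one_of_le₀ (mod_cast Finset.card_filter_le _ _) hF'_card.le)
    (fun t _ => div_le_one_of_le₀ (mod_cast Finset.card_le_univ _) hΩ.le) htranslates hpoints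
  exact ⟨t, (le_div_iff₀ hF'_card).mp hft, (le_div_iff₀ hΩ).mp hgt⟩

theorem exists_folnerInv_of_lt_invLimsup {ψ : Finset G → ℝ} (hψ : ∀ F, 0 ≤ ψ F) {c : ℝ}
    (hc : 0 ≤ c) (h : c < invLimsup ψ) (K : Finset G) {δ : ℝ} (hδ : 0 < δ) :
    ∃ F, FolnerInv K δ F ∧ c * F.card < ψ F := by
  by_contra! hcon
  have hnonneg (K : Finset G) (δ : {d : ℝ // 0 < d}) :
      0 ≤ sSup ((fun F : Finset G => ψ F / F.card) '' {F | FolnerInv K δ.1 F}) :=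
    Real.sSup_nonneg <| forall_mem_image.mpr fun F _ => div_nonneg (hψ F) F.card.cast_nonneg
  have hle : invLimsup ψ ≤ sSup ((fun F : Finset G => ψ F / F.card) '' {F | FolnerInv K δ F}) :=
    (ciInf_le ⟨0, forall_mem_range.mpr fun K => Real.iInf_nonneg (hnonneg K)⟩ K).trans
      (ciInf_le ⟨0, forall_mem_range.mpr (hnonneg K)⟩ (⟨δ, hδ⟩ : {d : ℝ // 0 < d}))
  refine h.not_ge (hle.trans (Real.sSup_le (forall_mem_image.mpr fun F hF => ?_) hc))
  exact div_le_of_le_mul₀ F.card.cast_nonneg hc (hcon F hF)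

theorem le_invLimsup (hamen : FolnerAmenable G) {ψ : Finset G → ℝ} {c C : ℝ}
    (hc : ∀ F : Finset G, F.Nonempty → c * F.card ≤ ψ F)
    (hC : ∀ F : Finset G, F.Nonempty → ψ F ≤ C * F.card) : c ≤ invLimsup ψ := by
  have : Nonempty {d : ℝ // 0 < d} := ⟨⟨1, one_pos⟩⟩
  have hcard {F : Finset G} (hF : F.Nonempty) : (0 : ℝ) < F.card := mod_cast hF.card_pos
  refine le_ciInf fun K => le_ciInf fun δ => ?_
  obtain ⟨F, hF⟩ := hamen K δ.1 δ.2
  refine le_csSup_of_le ⟨C, forall_mem_image.mpr fun F hF => ?_⟩ (mem_image_of_mem _ hF) ?_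
  · exact (div_le_iff₀ (hcard hF.1)).mpr (hC F hF.1)
  · exact (le_div_iff₀ (hcard hF.1)).mpr (hc F hF.1)

end Folner

section Density

variable {G X α : Type*} [Group G] [MulAction G X] {k : ℕ}

/- For a suitable `t ∈ F`, the translate `F' * t` meets `J` in a large set, and `t • x σ ∈ D` for
most of the points `x σ ∈ D'` realising `J`. The part of `J ∩ F' * t` shattered by these `σ`,
translated back by `t`, is independent relative to `D`. -/
theorem FolnerInv.exists_indepFinset [Fintype α] [Nonempty α] {A : α → Set X} {D D' : Set X}
    {F F' J : Finset G} {d : ℝ} (hd : 0 ≤ d) (hF' : F'.Nonempty)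
    (hF : FolnerInv (F'.image (·⁻¹)) (d / 4) F) (hJF : J ⊆ F) (hJ_card : d * F.card ≤ J.card)
    (hJ : IndepFinset A D' J)
    (hD' : ∀ x ∈ D', (1 - 1 / (2 * Fintype.card α) * (d / 4)) * F.card
      ≤ (F.filter fun t => t • x ∈ D).card) :
    ∃ I ⊆ F', d / 2 * F'.card / (2 * Fintype.card α) ≤ I.card ∧ IndepFinset A D I := by
  choose x hxD' hxA using hJ
  obtain ⟨t, ht_card, ht⟩ := hF.exists_mul_card_le_and_mul_card_le (a := d / 2)
    (by positivity) (by positivity) hF' hJF (hJ_card.trans' (by gcongr; linarith))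
    fun σ => hD' _ (hxD' σ)
  set K : Finset G := {f ∈ F' | f * t ∈ J}
  have hK (f : K) : (f : G) * t ∈ J := (Finset.mem_filter.mp f.2).2
  obtain ⟨I, hIK, hI_card, hI⟩ := exists_indepFinset_of_le_card_filter_mem (A := A)
    (e := fun f : K => ⟨f * t, hK f⟩) (p := fun σ => t • x σ)
    (fun f g hfg => Subtype.ext (mul_right_cancel (congrArg Subtype.val hfg)))
    (fun σ f => by simpa only [smul_smul] using hxA σ ⟨f * t, hK f⟩) ht
  exact ⟨I, hIK.trans (Finset.filter_subset _ _), hI_card.trans' (by gcongr), hI⟩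

theorem IndepFinset.indepRel {A : Fin k → Set X} {D : Set X} {J : Finset G}
    (h : IndepFinset A D J) : IndepRel A (fun _ : G => D) (J : Set G) := by
  intro F hFJ _ σ
  obtain ⟨x, hxD, hx⟩ := h fun s => σ s
  exact ⟨x, mem_iInter₂.mpr fun s hs => ⟨hxD, hx ⟨s, hFJ hs⟩⟩⟩

theorem IndepRel.indepFinset {A : Fin k → Set X} {D : Set X} {J : Finset G}
    (h : IndepRel A (fun _ : G => D) (J : Set G)) (hJ : J.Nonempty) : IndepFinset A D J := by
  intro σ
  obtain ⟨s₀, hs₀⟩ := hJ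
  obtain ⟨x, hx⟩ := h J subset_rfl ⟨s₀, hs₀⟩ fun s =>
    if hs : s ∈ J then σ ⟨s, hs⟩ else σ ⟨s₀, hs₀⟩
  rw [mem_iInter₂] at hx
  exact ⟨x, (hx s₀ hs₀).1, fun s => by simpa using (hx s s.2).2⟩

theorem le_maxIndep_iff {A : Fin k → Set X} {D : G → Set X} {F : Finset G} {c : ℝ} :
    c ≤ maxIndep A D F ↔ ∃ J ⊆ F, c ≤ J.card ∧ IndepRel A D (J : Set G) := by
  let sizes : Set ℕ := {m | ∃ J : Set G, IndepRel A D J ∧ m = ((F : Set G) ∩ J).ncard}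
  have hbdd : BddAbove sizes := by
    refine ⟨F.card, ?_⟩
    rintro _ ⟨J, -, rfl⟩
    exact (Set.ncard_le_ncard inter_subset_left F.finite_toSet).trans_eq (Set.ncard_coe_finset F)
  have hempty : IndepRel A D ∅ := fun I hI ⟨s, hs⟩ => (hI hs).elim
  constructor
  · intro h
    obtain ⟨J, hJ, hmax⟩ : maxIndep A D F ∈ sizes := Nat.sSup_mem ⟨0, ∅, hempty, by simp⟩ hbdd
    have hcoe : ((F.filter (· ∈ J) : Finset G) : Set G) = (F : Set G) ∩ J := Finset.coe_filter ..
    refine ⟨F.filter (· ∈ J), Finset.filter_subset _ _, ?_, ?_⟩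
    · rwa [← Set.ncard_coe_finset, hcoe, ← hmax]
    · exact fun I hI => hJ I ((hI.trans_eq hcoe).trans inter_subset_right)
  · rintro ⟨J, hJF, hcJ, hJ⟩
    refine hcJ.trans (mod_cast le_csSup hbdd ⟨J, hJ, ?_⟩)
    rw [inter_eq_right.mpr (mod_cast hJF), Set.ncard_coe_finset]

variable [MeasurableSpace X] {μ : Measure X} [IsProbabilityMeasure μ]

theorem le_phiConst_iff {A : Fin k → Set X} {δ c : ℝ} (hδ : 0 ≤ δ) (hc : 0 < c) {F : Finset G} :
    c ≤ phiConst μ A δ F ↔ ∀ D, MeasurableSet D → 1 - δ ≤ μ.real D →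
      ∃ J ⊆ F, c ≤ J.card ∧ IndepFinset A D J := by
  have hmax (D : Set X) : c ≤ maxIndep A (fun _ : G => D) F ↔
      ∃ J ⊆ F, c ≤ J.card ∧ IndepFinset A D J := by
    rw [le_maxIndep_iff]
    refine exists_congr fun J => and_congr_right fun _ => and_congr_right fun hcJ => ?_
    have hJ : J.Nonempty := Finset.card_pos.mp (mod_cast hc.trans_le hcJ)
    exact ⟨fun h => h.indepFinset hJ, IndepFinset.indepRel⟩
  simp only [← hmax]
  constructor
  · exact fun h D hD hDμ => h.trans (mod_cast Nat.sInf_le ⟨D, hD, hDμ, rfl⟩)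
  · intro h
    obtain ⟨D, hD, hDμ, hmin⟩ : phiConst μ A δ F ∈ {m : ℕ | ∃ D : Set X, MeasurableSet D ∧
        1 - δ ≤ (μ D).toReal ∧ m = maxIndep A (fun _ : G => D) F} :=
      Nat.sInf_mem ⟨_, univ, MeasurableSet.univ, by simpa using hδ, rfl⟩
    exact hmin ▸ h D hD hDμ

theorem phiConst_le_card (A : Fin k → Set X) {δ : ℝ} (hδ : 0 ≤ δ) (F : Finset G) :
    phiConst μ A δ F ≤ F.card := by
  rcases (phiConst μ A δ F).eq_zero_or_pos with hzero | hpos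
  · exact hzero.trans_le (Nat.zero_le _)
  · obtain ⟨J, hJF, hJ_card, -⟩ := (le_phiConst_iff hδ (Nat.cast_pos.mpr hpos)).mp le_rfl univ
      MeasurableSet.univ (by simpa using hδ)
    exact (Nat.cast_le.mp hJ_card).trans (Finset.card_le_card hJF)

theorem UniformlyIndep.upperIndepDens_pos (hamen : FolnerAmenable G) {A : Fin k → Set X}
    (h : UniformlyIndep G μ A) : 0 < upperIndepDens G μ A := by
  obtain ⟨c, hc, δ, hδ, h⟩ := h
  have hphi_le {δ : ℝ} (hδ : 0 < δ) (F : Finset G) : (phiConst μ A δ F : ℝ) ≤ 1 * F.card := by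
    simpa using phiConst_le_card A hδ.le F
  have hbdd : BddAbove (range fun δ : {d : ℝ // 0 < d} =>
      invLimsup fun F : Finset G => (phiConst μ A δ.1 F : ℝ)) := by
    refine ⟨1, forall_mem_range.mpr fun δ => not_lt.mp fun hlt => ?_⟩
    obtain ⟨F, -, hF⟩ := exists_folnerInv_of_lt_invLimsup (fun _ => Nat.cast_nonneg _)
      zero_le_one hlt ∅ one_pos
    exact hF.not_ge (hphi_le δ.2 F)
  have hle : c ≤ invLimsup fun F : Finset G => (phiConst μ A δ F : ℝ) := by
    refine le_invLimsup hamen (fun F hF => ?_) fun F _ => hphi_le hδ F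
    have hF_card : (0 : ℝ) < F.card := mod_cast hF.card_pos
    exact (le_phiConst_iff hδ.le (mul_pos hc hF_card)).mpr (h F hF)
  exact hc.trans_le (hle.trans (le_ciSup hbdd ⟨δ, hδ⟩))

theorem exists_folnerInv_indepFinset_of_upperIndepDens_pos {A : Fin k → Set X}
    (h : 0 < upperIndepDens G μ A) :
    ∃ d > (0 : ℝ), ∃ δ > (0 : ℝ), ∀ (K : Finset G) (ε : ℝ), 0 < ε →
      ∃ F, FolnerInv K ε F ∧ ∀ D, MeasurableSet D → 1 - δ ≤ μ.real D →
        ∃ J ⊆ F, d * F.card ≤ J.card ∧ IndepFinset A D J := by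
  have : Nonempty {d : ℝ // 0 < d} := ⟨⟨1, one_pos⟩⟩
  obtain ⟨⟨δ, hδ⟩, hlimsup⟩ := exists_lt_of_lt_ciSup h
  obtain ⟨d, hd, hd_lt⟩ := exists_between hlimsup
  refine ⟨d, hd, δ, hδ, fun K ε hε => ?_⟩
  obtain ⟨F, hF, hlt⟩ :=
    exists_folnerInv_of_lt_invLimsup (fun _ => Nat.cast_nonneg _) hd.le hd_lt K hε
  have hF_card : (0 : ℝ) < F.card := mod_cast hF.1.card_pos
  exact ⟨F, hF, (le_phiConst_iff hδ.le (mul_pos hd hF_card)).mp hlt.le⟩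

theorem uniformlyIndep_of_upperIndepDens_pos [Nonempty (Fin k)]
    (hμ : ∀ s : G, MeasurePreserving (fun x : X => s • x) μ μ) {A : Fin k → Set X}
    (h : 0 < upperIndepDens G μ A) : UniformlyIndep G μ A := by
  obtain ⟨d, hd, δ, hδ, h⟩ := exists_folnerInv_indepFinset_of_upperIndepDens_pos h
  set m : ℝ := 2 * Fintype.card (Fin k)
  have : 0 < m := by positivity
  refine ⟨d / 2 / m, by positivity, 1 / m * (d / 4) * δ, by positivity, fun F' hF' D hD hDμ => ?_⟩
  obtain ⟨F, hF, hFD⟩ := h (F'.image (·⁻¹)) (d / 4) (by positivity)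
  obtain ⟨D', hD', hD'μ, hfreq⟩ := exists_measurableSet_le_card_filter_mem hF.1
    (fun t _ => (hμ t).measurable hD) (by positivity : 0 < 1 / m * (d / 4)) fun t _ => by
      rwa [(hμ t).measureReal_preimage hD.nullMeasurableSet]
  obtain ⟨J, hJF, hJ_card, hJ⟩ := hFD D' hD' hD'μ
  rw [div_mul_eq_mul_div]
  exact hF.exists_indepFinset hd.le hF' hJF hJ_card hJ hfreq

end Density

theorem InvariantMeasure.measurePreserving {G X : Type*} [Group G] [MulAction G X]
    [MeasurableSpace X] [MeasurableConstSMul G X] {μ : Measure X}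
    (hμ : InvariantMeasure G μ) (s : G) : MeasurePreserving (fun x : X => s • x) μ μ :=
  ⟨measurable_const_smul s, Measure.ext fun B hB => by
    rw [Measure.map_apply (measurable_const_smul s) hB, hμ s B hB]⟩

theorem isMuIETuple_iff_uniformlyIndep {G X : Type*} [Group G] [TopologicalSpace X]
    [MulAction G X] [MeasurableSpace X] {μ : Measure X} [IsProbabilityMeasure μ] {k : ℕ}
    [Nonempty (Fin k)] (hamen : FolnerAmenable G)
    (hμ : ∀ s : G, MeasurePreserving (fun x : X => s • x) μ μ) {x : Fin k → X} :
    IsMuIETuple G μ x ↔ ∀ U : Fin k → Set X, (∀ i, U i ∈ nhds (x i)) → UniformlyIndep G μ U :=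
  forall₂_congr fun _ _ =>
    ⟨uniformlyIndep_of_upperIndepDens_pos hμ, UniformlyIndep.upperIndepDens_pos hamen⟩

theorem stmt12_general {G X Y : Type*} [Group G]
    [TopologicalSpace X] [MulAction G X] [MeasurableSpace X] [MeasurableConstSMul G X]
    [TopologicalSpace Y] [MulAction G Y] [MeasurableSpace Y] [MeasurableConstSMul G Y]
    (hamen : FolnerAmenable G)
    (μ : Measure X) [IsProbabilityMeasure μ] (hμ : InvariantMeasure G μ)
    (ν : Measure Y) [IsProbabilityMeasure ν] (hν : InvariantMeasure G ν)
    (k : ℕ) (hk : 1 ≤ k) (z : Fin k → X × Y) :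
    IsMuIETuple G (μ.prod ν) z ↔
      IsMuIETuple G μ (fun i => (z i).1) ∧ IsMuIETuple G ν (fun i => (z i).2) := by
  have : Nonempty (Fin k) := ⟨⟨0, hk⟩⟩
  have hμ' := hμ.measurePreserving
  have hν' := hν.measurePreserving
  rw [isMuIETuple_iff_uniformlyIndep hamen fun s => (hμ' s).prod (hν' s),
    isMuIETuple_iff_uniformlyIndep hamen hμ', isMuIETuple_iff_uniformlyIndep hamen hν']
  refine ⟨fun h => ⟨fun U hU => ?_, fun V hV => ?_⟩, fun ⟨hX, hY⟩ W hW => ?_⟩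
  · exact (h _ fun i => continuous_fst.continuousAt (hU i)).map (MulActionHom.fst G X Y)
      measurePreserving_fst
  · exact (h _ fun i => continuous_snd.continuousAt (hV i)).map (MulActionHom.snd G X Y)
      measurePreserving_snd
  · choose U hU V hV hUV using fun i => mem_nhds_prod_iff.mp (hW i)
    exact ((hX U hU).prod (hY V hV)).comp_subset (fun i => (i, i)) hUV

/-- Theorem (product formula): identifying `(X × Y)^k` with `X^k × Y^k`, one has
`IE^{μ×ν}_k(X × Y) = IE^μ_k(X) × IE^ν_k(Y)`, where `G` acts diagonally on `X × Y`. -/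
theorem stmt12 {G X Y : Type*} [Group G]
    [TopologicalSpace X] [CompactSpace X] [T2Space X] [MulAction G X]
    [ContinuousConstSMul G X] [MeasurableSpace X] [BorelSpace X]
    [TopologicalSpace Y] [CompactSpace Y] [T2Space Y] [MulAction G Y]
    [ContinuousConstSMul G Y] [MeasurableSpace Y] [BorelSpace Y]
    (hamen : FolnerAmenable G)
    (μ : Measure X) [IsProbabilityMeasure μ] (hμ : InvariantMeasure G μ)
    (ν : Measure Y) [IsProbabilityMeasure ν] (hν : InvariantMeasure G ν)
    (k : ℕ) (hk : 1 ≤ k) (z : Fin k → X × Y) :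
    IsMuIETuple G (μ.prod ν) z ↔
      IsMuIETuple G μ (fun i => (z i).1) ∧ IsMuIETuple G ν (fun i => (z i).2) :=
  stmt12_general hamen μ hμ ν hν k hk z
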